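/- Key lemma for the Wyner–Ziv strong converse: there exist sequences o₁'(n) → 0 and o₂'(n) → 0 such that, with U := (X̃^{T−1}, Ỹ_{T+1}ⁿ, M̃, T): (i) R ≥ H(X|Y) + o₁'(n) − H(X̃|Ỹ,U); (ii) 0 ≥ H(Y|X) + o₂'(n) − H(Ỹ|X̃,U); (iii) 0 ≥ I(X̃;Z̃|Ỹ,U) − H(Ỹ|X̃,U) + H(Y|X) + o₂'(n); and (iv) E[d(X̃,Z̃)] ≤ D. -/

import Mathlib

open Filter

noncomputable section

/-- `p` is a probability mass function on the finite alphabet `α`. -/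
def IsPMF {α : Type*} [Fintype α] (p : α → ℝ) : Prop :=
  (∀ a, 0 ≤ p a) ∧ ∑ a, p a = 1

open Classical in
/-- Probability that the random variable `X` takes the value `a`, under the pmf `p`. -/
def probEq {Ω α : Type*} [Fintype Ω] (p : Ω → ℝ) (X : Ω → α) (a : α) : ℝ :=
  ∑ ω, if X ω = a then p ω else 0

/-- Shannon entropy (base 2) of the random variable `X` under the pmf `p`. -/
def entOf {Ω α : Type*} [Fintype Ω] (p : Ω → ℝ) (X : Ω → α) : ℝ :=
  -∑ ω, p ω * Real.logb 2 (probEq p X (X ω))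

/-- Conditional Shannon entropy `H(X | Y)` under the pmf `p`. -/
def condEntOf {Ω α β : Type*} [Fintype Ω] (p : Ω → ℝ) (X : Ω → α) (Y : Ω → β) : ℝ :=
  entOf p (fun ω => (X ω, Y ω)) - entOf p Y

/-- Mutual information `I(X ; Y)` under the pmf `p`. -/
def miOf {Ω α β : Type*} [Fintype Ω] (p : Ω → ℝ) (X : Ω → α) (Y : Ω → β) : ℝ :=
  entOf p X + entOf p Y - entOf p (fun ω => (X ω, Y ω))

/-- Conditional mutual information `I(X ; Y | Z)` under the pmf `p`. -/
def condMIOf {Ω α β γ : Type*} [Fintype Ω] (p : Ω → ℝ) (X : Ω → α) (Y : Ω → β)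
    (Z : Ω → γ) : ℝ :=
  condEntOf p X Z + condEntOf p Y Z - condEntOf p (fun ω => (X ω, Y ω)) Z

open Classical in
/-- Probability of the set `S` under the pmf `p`. -/
def probSet {Ω : Type*} [Fintype Ω] (p : Ω → ℝ) (S : Set Ω) : ℝ :=
  ∑ ω, if ω ∈ S then p ω else 0

open Classical in
/-- Number of occurrences of the symbol `a` in the sequence `w`. -/
def Ncount {W : Type*} {n : ℕ} (w : Fin n → W) (a : W) : ℕ :=
  (Finset.univ.filter (fun i => w i = a)).card

/-- The strongly typical set `T_μ⁽ⁿ⁾(P)`: sequences whose empirical frequencies differ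
from `P` by at most `μ` in every entry and that contain no symbol of zero probability. -/
def typicalSet {W : Type*} [Fintype W] (P : W → ℝ) (μ : ℝ) (n : ℕ) : Set (Fin n → W) :=
  {w | ∀ a, |((Ncount w a : ℝ)) / n - P a| ≤ μ ∧ (P a = 0 → Ncount w a = 0)}

/-- The typicality parameter `μ_n = n^{-1/3}`. -/
def μseq (n : ℕ) : ℝ := (n : ℝ) ^ (-(1/3 : ℝ))

/-- The i.i.d. pmf on sequences of length `n`. -/
def iidSeq {W : Type*} [Fintype W] (P : W → ℝ) (n : ℕ) (w : Fin n → W) : ℝ :=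
  ∏ i, P (w i)

/-- The i.i.d. pmf on pairs of sequences of length `n`. -/
def iidPair {X Y : Type*} [Fintype X] [Fintype Y] (P : X × Y → ℝ) (n : ℕ)
    (xy : (Fin n → X) × (Fin n → Y)) : ℝ :=
  ∏ i, P (xy.1 i, xy.2 i)

/-- A pair of sequences viewed as one sequence over the product alphabet. -/
def pairSeq {X Y : Type*} {n : ℕ} (xy : (Fin n → X) × (Fin n → Y)) : Fin n → X × Y :=
  fun i => (xy.1 i, xy.2 i)

section WynerZivLemma

variable {X Y Z : Type*} [Fintype X] [Fintype Y] [Fintype Z]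

/-- The set `D_n` of typical pairs whose reconstruction meets the distortion constraint. -/
def WZD (P : X × Y → ℝ) (d : X → Z → ℝ) (D : ℝ) {n : ℕ} {M : ℕ}
    (φ : (Fin n → X) → Fin M) (g : Fin M → (Fin n → Y) → (Fin n → Z)) :
    Set ((Fin n → X) × (Fin n → Y)) :=
  {xy | pairSeq xy ∈ typicalSet P (μseq n) n ∧
        (∑ i, d (xy.1 i) (g (φ xy.1) xy.2 i)) / n ≤ D}

/-- `Δ_n`, the probability of `D_n` under the i.i.d. source law. -/
def WZdelta (P : X × Y → ℝ) (d : X → Z → ℝ) (D : ℝ) {n M : ℕ}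
    (φ : (Fin n → X) → Fin M) (g : Fin M → (Fin n → Y) → (Fin n → Z)) : ℝ :=
  probSet (iidPair P n) (WZD P d D φ g)

open Classical in
/-- The change-of-measure pmf `P_{X̃ⁿỸⁿ}`: the i.i.d. law restricted to `D_n`, normalized. -/
def WZpt (P : X × Y → ℝ) (d : X → Z → ℝ) (D : ℝ) {n M : ℕ}
    (φ : (Fin n → X) → Fin M) (g : Fin M → (Fin n → Y) → (Fin n → Z))
    (xy : (Fin n → X) × (Fin n → Y)) : ℝ :=
  if xy ∈ WZD P d D φ g then iidPair P n xy / WZdelta P d D φ g else 0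

/-- The pmf of `((X̃ⁿ,Ỹⁿ),T)` with `T` uniform on `{1,…,n}` and independent of the rest. -/
def WZfull (P : X × Y → ℝ) (d : X → Z → ℝ) (D : ℝ) {n M : ℕ}
    (φ : (Fin n → X) → Fin M) (g : Fin M → (Fin n → Y) → (Fin n → Z))
    (ω : ((Fin n → X) × (Fin n → Y)) × Fin n) : ℝ :=
  WZpt P d D φ g ω.1 / n

/-- The single-letter random variable `X̃ = X̃_T`. -/
def WZXt {n : ℕ} (ω : ((Fin n → X) × (Fin n → Y)) × Fin n) : X := ω.1.1 ω.2

/-- The single-letter random variable `Ỹ = Ỹ_T`. -/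
def WZYt {n : ℕ} (ω : ((Fin n → X) × (Fin n → Y)) × Fin n) : Y := ω.1.2 ω.2

/-- The single-letter random variable `Z̃ = Z̃_T`. -/
def WZZt {n M : ℕ} (φ : (Fin n → X) → Fin M) (g : Fin M → (Fin n → Y) → (Fin n → Z))
    (ω : ((Fin n → X) × (Fin n → Y)) × Fin n) : Z :=
  g (φ ω.1.1) ω.1.2 ω.2

open Classical in
/-- The auxiliary random variable `U := (X̃^{T−1}, Ỹ_{T+1}ⁿ, M̃, T)`. -/
def WZU {n M : ℕ} (φ : (Fin n → X) → Fin M)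
    (ω : ((Fin n → X) × (Fin n → Y)) × Fin n) :
    (Fin n → Option X) × (Fin n → Option Y) × Fin M × Fin n :=
  ((fun i => if (i : ℕ) < (ω.2 : ℕ) then some (ω.1.1 i) else none),
   (fun i => if (ω.2 : ℕ) < (i : ℕ) then some (ω.1.2 i) else none),
   φ ω.1.1, ω.2)

/-!
Conditioning the i.i.d. law on the typical set `D_n` changes log-likelihoods only by
`log Δ_n = o(n)`, and on typical pairs the i.i.d. log-likelihood is `-n H + o(n)`. Hence
`H(X̃ⁿ, Ỹⁿ) ≥ n H(X, Y) - o(n)`, while the Gibbs inequality against the i.i.d. marginals gives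
`H(X̃ⁿ) ≤ n H(X) + o(n)` and `H(Ỹⁿ) ≤ n H(Y) + o(n)`.

For any law of `(X̃ⁿ, Ỹⁿ)`, the Csiszár sum identity yields
`n (H(X̃|Ỹ,U) - H(Ỹ|X̃,U)) = H(X̃ⁿ) - H(Ỹⁿ, M̃)`, and since `(X̃^{i-1}, Ỹⁿ, M̃)` determines
`(Z̃_i, Ỹ_i, U_i)`, the chain rule yields `H(X̃ⁿ, Ỹⁿ) - H(Ỹⁿ, M̃) ≤ n H(X̃|Z̃,Ỹ,U)`. Subtracting
the two gives (iii), and with it (ii); the second one and `H(M̃) ≤ n R` give (i).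
-/

section Expectation

variable {Ω : Type*} [Fintype Ω] {p f h : Ω → ℝ}

theorem weighted_sum_congr (hfh : ∀ ω, p ω ≠ 0 → f ω = h ω) :
    ∑ ω, p ω * f ω = ∑ ω, p ω * h ω := by
  refine Finset.sum_congr rfl fun ω _ => ?_
  rcases eq_or_ne (p ω) 0 with hω | hω
  · simp [hω]
  · rw [hfh ω hω]

theorem weighted_sum_le_weighted_sum (hp : ∀ ω, 0 ≤ p ω) (hfh : ∀ ω, p ω ≠ 0 → f ω ≤ h ω) :
    ∑ ω, p ω * f ω ≤ ∑ ω, p ω * h ω := by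
  refine Finset.sum_le_sum fun ω _ => ?_
  rcases eq_or_ne (p ω) 0 with hω | hω
  · simp [hω]
  · exact mul_le_mul_of_nonneg_left (hfh ω hω) (hp ω)

theorem IsPMF.sum_mul_const (hp : IsPMF p) (c : ℝ) : ∑ ω, p ω * c = c := by
  rw [← Finset.sum_mul, hp.2, one_mul]

theorem IsPMF.nonempty (hp : IsPMF p) : Nonempty Ω := by
  by_contra hΩ
  rw [not_nonempty_iff] at hΩ
  simpa using hp.2

theorem IsPMF.abs_weighted_sum_sub_le (hp : IsPMF p) {c r : ℝ}
    (hf : ∀ ω, p ω ≠ 0 → |f ω - c| ≤ r) : |∑ ω, p ω * f ω - c| ≤ r := by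
  have hup : ∑ ω, p ω * f ω ≤ ∑ ω, p ω * (c + r) :=
    weighted_sum_le_weighted_sum hp.1 fun ω hω => by linarith [(abs_le.1 (hf ω hω)).2]
  have hlow : ∑ ω, p ω * (c - r) ≤ ∑ ω, p ω * f ω :=
    weighted_sum_le_weighted_sum hp.1 fun ω hω => by linarith [(abs_le.1 (hf ω hω)).1]
  rw [hp.sum_mul_const] at hup hlow
  exact abs_le.2 ⟨by linarith, by linarith⟩

end Expectation

section Marginal

variable {Ω α β : Type*} [Fintype Ω] {p : Ω → ℝ}

theorem probEq_nonneg (hp : ∀ ω, 0 ≤ p ω) (V : Ω → α) (a : α) : 0 ≤ probEq p V a :=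
  Finset.sum_nonneg fun ω _ => by split_ifs <;> simp [hp ω]

theorem probEq_pos (hp : ∀ ω, 0 ≤ p ω) (V : Ω → α) {ω : Ω} (hω : p ω ≠ 0) :
    0 < probEq p V (V ω) :=
  Finset.sum_pos' (fun ω' _ => by split_ifs <;> simp [hp ω'])
    ⟨ω, Finset.mem_univ ω, by simpa using (hp ω).lt_of_ne' hω⟩

theorem probEq_id (p : Ω → ℝ) : probEq p id = p := by
  classical
  funext ω
  simp [probEq]

theorem sum_mul_comp_eq_sum_probEq_mul [Fintype α] (p : Ω → ℝ) (V : Ω → α) (f : α → ℝ) :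
    ∑ ω, p ω * f (V ω) = ∑ a, probEq p V a * f a := by
  classical
  simp only [probEq, Finset.sum_mul, ite_mul, zero_mul]
  rw [Finset.sum_comm]
  simp

theorem IsPMF.isPMF_probEq [Fintype α] (hp : IsPMF p) (V : Ω → α) : IsPMF (probEq p V) :=
  ⟨probEq_nonneg hp.1 V, by
    simpa [hp.2] using (sum_mul_comp_eq_sum_probEq_mul p V fun _ => 1).symm⟩

theorem sum_probEq_prodMk [Fintype α] (p : Ω → ℝ) (A : Ω → α) (C : Ω → β) (c : β) :
    ∑ a, probEq p (fun ω => (A ω, C ω)) (a, c) = probEq p C c := by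
  classical
  simp only [probEq]
  rw [Finset.sum_comm]
  refine Finset.sum_congr rfl fun ω _ => ?_
  by_cases hC : C ω = c <;> simp [hC]

end Marginal

section Entropy

variable {Ω α β γ : Type*} [Fintype Ω] {p : Ω → ℝ}

theorem entOf_congr (p : Ω → ℝ) {V : Ω → α} {W : Ω → β}
    (hVW : ∀ ω ω', V ω = V ω' ↔ W ω = W ω') : entOf p V = entOf p W := by
  have hprob : ∀ ω, probEq p V (V ω) = probEq p W (W ω) := fun ω => by
    classical exact Finset.sum_congr rfl fun ω' _ => if_congr (hVW ω' ω) rfl rfl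
  simp only [entOf, hprob]

theorem condEntOf_congr_right (p : Ω → ℝ) (A : Ω → α) {B : Ω → β} {C : Ω → γ}
    (hBC : ∀ ω ω', B ω = B ω' ↔ C ω = C ω') : condEntOf p A B = condEntOf p A C := by
  rw [condEntOf, condEntOf, entOf_congr p hBC,
    entOf_congr p (W := fun ω => (A ω, C ω)) fun ω ω' => by simp only [Prod.mk.injEq, hBC]]

theorem condMIOf_eq_condEntOf_sub_condEntOf (p : Ω → ℝ) (A : Ω → α) (B : Ω → β) (C : Ω → γ) :
    condMIOf p A B C = condEntOf p A C - condEntOf p A (fun ω => (B ω, C ω)) := by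
  have hassoc : entOf p (fun ω => ((A ω, B ω), C ω)) = entOf p (fun ω => (A ω, B ω, C ω)) :=
    entOf_congr p fun ω ω' => by simp only [Prod.mk.injEq, and_assoc]
  simp only [condMIOf, condEntOf, hassoc]
  ring

theorem IsPMF.entOf_le_crossEntropy [Fintype α] (hp : IsPMF p) (V : Ω → α) {q : α → ℝ}
    (hq : ∀ a, 0 ≤ q a) (hq_sum : ∑ a, q a ≤ 1) (hq_pos : ∀ ω, p ω ≠ 0 → 0 < q (V ω)) :
    entOf p V ≤ -∑ ω, p ω * Real.logb 2 (q (V ω)) := by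
  have hlog2 : 0 < Real.log 2 := Real.log_pos one_lt_two
  have hratio : ∑ ω, p ω * (q (V ω) / probEq p V (V ω)) ≤ 1 := by
    rw [sum_mul_comp_eq_sum_probEq_mul p V fun a => q a / probEq p V a]
    refine (Finset.sum_le_sum fun a _ => ?_).trans hq_sum
    rcases eq_or_ne (probEq p V a) 0 with ha | ha
    · simpa [ha] using hq a
    · rw [mul_div_cancel₀ _ ha]
  have hlog_le : ∀ ω, p ω ≠ 0 →
      Real.logb 2 (q (V ω)) - Real.logb 2 (probEq p V (V ω))
        ≤ (q (V ω) / probEq p V (V ω) - 1) / Real.log 2 := fun ω hω => by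
    have hV := probEq_pos hp.1 V hω
    rw [← Real.logb_div (hq_pos ω hω).ne' hV.ne']
    exact div_le_div_of_nonneg_right
      (Real.log_le_sub_one_of_pos (div_pos (hq_pos ω hω) hV)) hlog2.le
  have hsum := weighted_sum_le_weighted_sum hp.1 hlog_le
  simp only [mul_div_assoc', mul_sub, mul_one, ← Finset.sum_div, Finset.sum_sub_distrib, hp.2]
    at hsum hratio
  have hnonpos := div_nonpos_of_nonpos_of_nonneg (sub_nonpos.2 hratio) hlog2.le
  rw [entOf]
  linarith

theorem IsPMF.condEntOf_prodMk_le [Finite α] [Finite β] [Finite γ] (hp : IsPMF p)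
    (A : Ω → α) (B : Ω → β) (C : Ω → γ) :
    condEntOf p A (fun ω => (B ω, C ω)) ≤ condEntOf p A C := by
  have := Fintype.ofFinite α
  have := Fintype.ofFinite β
  have := Fintype.ofFinite γ
  let pAC := probEq p fun ω => (A ω, C ω)
  let pBC := probEq p fun ω => (B ω, C ω)
  let pC := probEq p C
  have hgibbs := hp.entOf_le_crossEntropy (fun ω => (A ω, B ω, C ω))
    (q := fun v => pAC (v.1, v.2.2) * pBC (v.2.1, v.2.2) / pC v.2.2)
    (fun v => div_nonneg (mul_nonneg (probEq_nonneg hp.1 _ _) (probEq_nonneg hp.1 _ _))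
      (probEq_nonneg hp.1 _ _))
    (by
      calc ∑ v : α × β × γ, pAC (v.1, v.2.2) * pBC (v.2.1, v.2.2) / pC v.2.2
          = ∑ c, (∑ a, pAC (a, c)) * (∑ b, pBC (b, c)) / pC c := by
            simp only [Fintype.sum_prod_type_right, Finset.sum_mul_sum, Finset.sum_div]
            exact Finset.sum_congr rfl fun c _ => Finset.sum_comm
        _ = ∑ c, pC c := by simp only [pAC, pBC, pC, sum_probEq_prodMk, mul_self_div_self]
        _ ≤ 1 := (hp.isPMF_probEq C).2.le)
    (fun ω hω => div_pos (mul_pos (probEq_pos hp.1 (fun ω => (A ω, C ω)) hω)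
      (probEq_pos hp.1 (fun ω => (B ω, C ω)) hω)) (probEq_pos hp.1 C hω))
  have hlog : ∑ ω, p ω * Real.logb 2 (pAC (A ω, C ω) * pBC (B ω, C ω) / pC (C ω))
      = ∑ ω, p ω * (Real.logb 2 (pAC (A ω, C ω)) + Real.logb 2 (pBC (B ω, C ω))
        - Real.logb 2 (pC (C ω))) :=
    weighted_sum_congr fun ω hω => by
      have hAC := (probEq_pos hp.1 (fun ω => (A ω, C ω)) hω).ne'
      have hBC := (probEq_pos hp.1 (fun ω => (B ω, C ω)) hω).ne'
      rw [Real.logb_div (mul_ne_zero hAC hBC) (probEq_pos hp.1 C hω).ne', Real.logb_mul hAC hBC]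
  simp only [hlog, mul_add, mul_sub, Finset.sum_add_distrib, Finset.sum_sub_distrib] at hgibbs
  simp only [condEntOf, entOf] at hgibbs ⊢
  linarith

theorem IsPMF.condEntOf_le_of_factorsThrough [Finite α] [Finite β] [Finite γ] (hp : IsPMF p)
    (A : Ω → α) {B : Ω → β} {C : Ω → γ} (hBC : B.FactorsThrough C) :
    condEntOf p A C ≤ condEntOf p A B :=
  calc condEntOf p A C = condEntOf p A (fun ω => (C ω, B ω)) :=
        condEntOf_congr_right p A fun ω ω' => by
          simpa only [Prod.mk.injEq, iff_self_and] using @hBC ω ω'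
    _ ≤ condEntOf p A B := hp.condEntOf_prodMk_le A C B

theorem IsPMF.condMIOf_nonneg [Finite α] [Finite β] [Finite γ] (hp : IsPMF p)
    (A : Ω → α) (B : Ω → β) (C : Ω → γ) : 0 ≤ condMIOf p A B C := by
  rw [condMIOf_eq_condEntOf_sub_condEntOf, sub_nonneg]
  exact hp.condEntOf_prodMk_le A B C

theorem IsPMF.condEntOf_le_logb_card [Fintype α] [Finite β] (hp : IsPMF p) (A : Ω → α)
    (B : Ω → β) : condEntOf p A B ≤ Real.logb 2 (Fintype.card α) := by
  have := Fintype.ofFinite β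
  have hcard : (0 : ℝ) < Fintype.card α := by
    have : Nonempty α := hp.nonempty.map A
    exact_mod_cast Fintype.card_pos
  have hgibbs := hp.entOf_le_crossEntropy (fun ω => (A ω, B ω))
    (q := fun v => probEq p B v.2 / Fintype.card α)
    (fun v => div_nonneg (probEq_nonneg hp.1 _ _) hcard.le)
    (by
      rw [Fintype.sum_prod_type]
      simp [← Finset.sum_div, (hp.isPMF_probEq B).2, hcard.ne'])
    (fun ω hω => div_pos (probEq_pos hp.1 B hω) hcard)
  have hlog : ∑ ω, p ω * Real.logb 2 (probEq p B (B ω) / Fintype.card α)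
      = ∑ ω, p ω * (Real.logb 2 (probEq p B (B ω)) - Real.logb 2 (Fintype.card α)) :=
    weighted_sum_congr fun ω hω => Real.logb_div (probEq_pos hp.1 B hω).ne' hcard.ne'
  simp only [hlog, mul_sub, Finset.sum_sub_distrib, hp.sum_mul_const] at hgibbs
  simp only [condEntOf, entOf] at hgibbs ⊢
  linarith

end Entropy

section UniformTime

variable {Ω α β : Type*} [Fintype Ω] {p : Ω → ℝ} {n : ℕ}

/-- The law of `(ω, T)` where `ω` has law `p` and the time-sharing variable `T` is uniform on
`Fin n` and independent of `ω`. -/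
def withUniformTime (p : Ω → ℝ) (n : ℕ) (ω : Ω × Fin n) : ℝ := p ω.1 / n

theorem IsPMF.isPMF_withUniformTime (hp : IsPMF p) (hn : n ≠ 0) : IsPMF (withUniformTime p n) := by
  refine ⟨fun ω => div_nonneg (hp.1 _) n.cast_nonneg, ?_⟩
  rw [Fintype.sum_prod_type_right]
  simp [withUniformTime, ← Finset.sum_div, hp.2, hn]

theorem sum_withUniformTime_mul (p : Ω → ℝ) (f : Ω × Fin n → ℝ) :
    ∑ ω, withUniformTime p n ω * f ω = ∑ ω, p ω * ((∑ i, f (ω, i)) / n) := by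
  rw [Fintype.sum_prod_type]
  simp only [withUniformTime, Finset.sum_div, Finset.mul_sum, div_mul_eq_mul_div, mul_div_assoc]

theorem probEq_withUniformTime (p : Ω → ℝ) {V : Ω × Fin n → α} {time : α → Fin n}
    (htime : ∀ ω, time (V ω) = ω.2) (ω : Ω) (i : Fin n) :
    probEq (withUniformTime p n) V (V (ω, i)) = probEq p (fun ω' => V (ω', i)) (V (ω, i)) / n := by
  rw [probEq, probEq, Fintype.sum_prod_type_right, Finset.sum_div,
    Finset.sum_eq_single i (fun j _ hj => Finset.sum_eq_zero fun ω' _ => if_neg fun h => hj ?_)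
      (by simp)]
  · simp only [withUniformTime, ite_div, zero_div]
  · simpa only [htime] using congrArg time h

theorem IsPMF.entOf_withUniformTime (hp : IsPMF p) (hn : n ≠ 0) {V : Ω × Fin n → α}
    {time : α → Fin n} (htime : ∀ ω, time (V ω) = ω.2) :
    entOf (withUniformTime p n) V
      = (∑ i, entOf p (fun ω => V (ω, i))) / n + Real.logb 2 n := by
  have hn' : (n : ℝ) ≠ 0 := Nat.cast_ne_zero.2 hn
  have hslice : ∀ i, ∑ ω, p ω * Real.logb 2 (probEq p (fun ω' => V (ω', i)) (V (ω, i)) / n)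
      = -entOf p (fun ω => V (ω, i)) - Real.logb 2 n := fun i => by
    rw [weighted_sum_congr fun ω hω =>
      Real.logb_div (probEq_pos hp.1 (fun ω' => V (ω', i)) hω).ne' hn']
    simp only [mul_sub, Finset.sum_sub_distrib, hp.sum_mul_const, entOf, neg_neg]
  rw [entOf, Fintype.sum_prod_type_right]
  simp only [probEq_withUniformTime p htime, withUniformTime, div_mul_eq_mul_div,
    ← Finset.sum_div, hslice, Finset.sum_sub_distrib, Finset.sum_neg_distrib, Finset.sum_const,
    Finset.card_univ, Fintype.card_fin, nsmul_eq_mul]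
  field_simp
  ring

theorem IsPMF.condEntOf_withUniformTime (hp : IsPMF p) (hn : n ≠ 0) (A : Ω × Fin n → α)
    {C : Ω × Fin n → β} {time : β → Fin n} (htime : ∀ ω, time (C ω) = ω.2) :
    n * condEntOf (withUniformTime p n) A C
      = ∑ i, condEntOf p (fun ω => A (ω, i)) (fun ω => C (ω, i)) := by
  simp only [condEntOf]
  rw [hp.entOf_withUniformTime hn (time := fun v => time v.2) htime,
    hp.entOf_withUniformTime hn htime, Finset.sum_sub_distrib]
  have hn' : (n : ℝ) ≠ 0 := Nat.cast_ne_zero.2 hn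
  field_simp
  ring

end UniformTime

section ChainRules

variable {Ω α β γ : Type*} [Fintype Ω] {n : ℕ}

/-- The symbols `x₀, …, x_{k-1}` of a sequence, the remaining positions being blanked out. -/
def past (k : ℕ) (x : Fin n → α) (j : Fin n) : Option α :=
  if (j : ℕ) < k then some (x j) else none

/-- The symbols `x_k, …, x_{n-1}` of a sequence, the remaining positions being blanked out. -/
def future (k : ℕ) (x : Fin n → α) (j : Fin n) : Option α :=
  if k ≤ (j : ℕ) then some (x j) else none

theorem past_eq_past_iff {k : ℕ} {x y : Fin n → α} :
    past k x = past k y ↔ ∀ j : Fin n, (j : ℕ) < k → x j = y j := by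
  simp only [funext_iff, past]
  refine forall_congr' fun j => ?_
  by_cases hj : (j : ℕ) < k <;> simp [hj]

theorem future_eq_future_iff {k : ℕ} {x y : Fin n → α} :
    future k x = future k y ↔ ∀ j : Fin n, k ≤ (j : ℕ) → x j = y j := by
  simp only [funext_iff, future]
  refine forall_congr' fun j => ?_
  by_cases hj : k ≤ (j : ℕ) <;> simp [hj]

theorem past_zero_eq_past_zero (x y : Fin n → α) : past 0 x = past 0 y := by
  simp [past_eq_past_iff]

theorem past_length_eq_past_length_iff {x y : Fin n → α} : past n x = past n y ↔ x = y := by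
  simp [past_eq_past_iff, ← funext_iff]

theorem past_succ_eq_past_succ_iff {x y : Fin n → α} (i : Fin n) :
    past (i + 1) x = past (i + 1) y ↔ x i = y i ∧ past i x = past i y := by
  simp only [past_eq_past_iff, Order.lt_add_one_iff, le_iff_lt_or_eq, ← Fin.ext_iff, or_imp,
    forall_and, forall_eq, and_comm]

theorem future_zero_eq_future_zero_iff {x y : Fin n → α} : future 0 x = future 0 y ↔ x = y := by
  simp [future_eq_future_iff, ← funext_iff]

theorem future_length_eq_future_length (x y : Fin n → α) : future n x = future n y := by
  simp [future_eq_future_iff]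

theorem future_eq_future_iff_succ {x y : Fin n → α} (i : Fin n) :
    future i x = future i y ↔ x i = y i ∧ future (i + 1) x = future (i + 1) y := by
  simp only [future_eq_future_iff, Order.add_one_le_iff]
  simp only [le_iff_eq_or_lt, ← Fin.ext_iff, or_imp, forall_and, forall_eq']

theorem sum_condEntOf_past (p : Ω → ℝ) (x : Ω → Fin n → α) (C : Ω → γ) :
    ∑ i : Fin n, condEntOf p (fun ω => x ω i) (fun ω => (past i (x ω), C ω))
      = condEntOf p x C := by
  let H : ℕ → ℝ := fun k => entOf p fun ω => (past k (x ω), C ω)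
  have hstep (i : Fin n) :
      condEntOf p (fun ω => x ω i) (fun ω => (past i (x ω), C ω)) = H (i + 1) - H i := by
    refine congrArg (· - H i) (entOf_congr p fun ω ω' => ?_)
    simp only [Prod.mk.injEq, past_succ_eq_past_succ_iff, and_assoc]
  have hH_zero : H 0 = entOf p C := entOf_congr p fun ω ω' => by
    simp only [Prod.mk.injEq, past_zero_eq_past_zero (x ω) (x ω'), true_and]
  have hH_length : H n = entOf p fun ω => (x ω, C ω) := entOf_congr p fun ω ω' => by
    simp only [Prod.mk.injEq, past_length_eq_past_length_iff]
  simp only [hstep]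
  rw [Fin.sum_univ_eq_sum_range (fun k => H (k + 1) - H k), Finset.sum_range_sub, hH_zero,
    hH_length, condEntOf]

/-- The Csiszár sum identity: the joint entropy of `x_i`, `y_i`, `x^{i-1}`, `y_{i+1}^n` and `m`
cancels in the `i`-th summand, and what is left telescopes along `k ↦ H(x^k, y_{k+1}^n, m)`. -/
theorem sum_condEntOf_sub_condEntOf (p : Ω → ℝ) (x : Ω → Fin n → α) (y : Ω → Fin n → β)
    (m : Ω → γ) :
    ∑ i : Fin n,
      (condEntOf p (fun ω => x ω i) (fun ω => (y ω i, past i (x ω), future (i + 1) (y ω), m ω))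
        - condEntOf p (fun ω => y ω i) (fun ω => (x ω i, past i (x ω), future (i + 1) (y ω), m ω)))
      = entOf p (fun ω => (x ω, m ω)) - entOf p (fun ω => (y ω, m ω)) := by
  let H : ℕ → ℝ := fun k => entOf p fun ω => (past k (x ω), future k (y ω), m ω)
  have hstep (i : Fin n) :
      condEntOf p (fun ω => x ω i) (fun ω => (y ω i, past i (x ω), future (i + 1) (y ω), m ω))
        - condEntOf p (fun ω => y ω i) (fun ω => (x ω i, past i (x ω), future (i + 1) (y ω), m ω))
      = H (i + 1) - H i := by
    have hswap := entOf_congr p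
      (V := fun ω => (x ω i, y ω i, past i (x ω), future (i + 1) (y ω), m ω))
      (W := fun ω => (y ω i, x ω i, past i (x ω), future (i + 1) (y ω), m ω)) fun ω ω' => by
        simp only [Prod.mk.injEq, and_left_comm]
    have hsucc := entOf_congr p (V := fun ω => (x ω i, past i (x ω), future (i + 1) (y ω), m ω))
      (W := fun ω => (past (i + 1) (x ω), future (i + 1) (y ω), m ω)) fun ω ω' => by
        simp only [Prod.mk.injEq, past_succ_eq_past_succ_iff, and_assoc]
    have hself := entOf_congr p (V := fun ω => (y ω i, past i (x ω), future (i + 1) (y ω), m ω))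
      (W := fun ω => (past i (x ω), future i (y ω), m ω)) fun ω ω' => by
        simp only [Prod.mk.injEq, future_eq_future_iff_succ i, and_assoc, and_left_comm]
    simp only [condEntOf, H, hswap, hsucc, hself]
    ring
  have hH_zero : H 0 = entOf p fun ω => (y ω, m ω) := entOf_congr p fun ω ω' => by
    simp only [Prod.mk.injEq, past_zero_eq_past_zero (x ω) (x ω'),
      future_zero_eq_future_zero_iff, true_and]
  have hH_length : H n = entOf p fun ω => (x ω, m ω) := entOf_congr p fun ω ω' => by
    simp only [Prod.mk.injEq, past_length_eq_past_length_iff,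
      future_length_eq_future_length (y ω) (y ω'), true_and]
  simp only [hstep]
  rw [Fin.sum_univ_eq_sum_range (fun k => H (k + 1) - H k), Finset.sum_range_sub, hH_zero,
    hH_length]

end ChainRules

section SingleLetter

variable {α β γ : Type*} {n M : ℕ}

theorem WZU_mk (φ : (Fin n → α) → Fin M) (xy : (Fin n → α) × (Fin n → β)) (i : Fin n) :
    WZU φ (xy, i) = (past i xy.1, future (i + 1) xy.2, φ xy.1, i) :=
  rfl

variable [Fintype α] [Fintype β] {p : (Fin n → α) × (Fin n → β) → ℝ}

theorem IsPMF.mul_condEntOf_sub_mul_condEntOf (hp : IsPMF p) (hn : n ≠ 0)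
    (φ : (Fin n → α) → Fin M) :
    n * condEntOf (withUniformTime p n) WZXt (fun ω => (WZYt ω, WZU φ ω))
        - n * condEntOf (withUniformTime p n) WZYt (fun ω => (WZXt ω, WZU φ ω))
      = entOf p Prod.fst - entOf p (fun xy => (xy.2, φ xy.1)) := by
  have hdropX (i : Fin n) :
      condEntOf p (fun xy => xy.1 i) (fun xy => (xy.2 i, WZU φ (xy, i)))
        = condEntOf p (fun xy => xy.1 i)
            (fun xy => (xy.2 i, past i xy.1, future (i + 1) xy.2, φ xy.1)) :=
    condEntOf_congr_right p _ fun xy xy' => by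
      simp only [WZU_mk, Prod.mk.injEq, and_true]
  have hdropY (i : Fin n) :
      condEntOf p (fun xy => xy.2 i) (fun xy => (xy.1 i, WZU φ (xy, i)))
        = condEntOf p (fun xy => xy.2 i)
            (fun xy => (xy.1 i, past i xy.1, future (i + 1) xy.2, φ xy.1)) :=
    condEntOf_congr_right p _ fun xy xy' => by
      simp only [WZU_mk, Prod.mk.injEq, and_true]
  have hmessage : entOf p (fun xy => (xy.1, φ xy.1)) = entOf p Prod.fst :=
    entOf_congr p fun xy xy' => by
      simpa only [Prod.mk.injEq, and_iff_left_iff_imp] using congrArg φ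
  rw [hp.condEntOf_withUniformTime hn WZXt (time := fun v => v.2.2.2.2) fun _ => rfl,
    hp.condEntOf_withUniformTime hn WZYt (time := fun v => v.2.2.2.2) fun _ => rfl,
    ← Finset.sum_sub_distrib, ← hmessage, ← sum_condEntOf_sub_condEntOf p Prod.fst Prod.snd]
  simp only [WZXt, WZYt, hdropX, hdropY]

theorem IsPMF.entOf_sub_entOf_le_mul_condEntOf [Finite γ] (hp : IsPMF p) (hn : n ≠ 0)
    (φ : (Fin n → α) → Fin M) (g : Fin M → (Fin n → β) → (Fin n → γ)) :
    entOf p id - entOf p (fun xy => (xy.2, φ xy.1))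
      ≤ n * condEntOf (withUniformTime p n) WZXt (fun ω => (WZZt φ g ω, WZYt ω, WZU φ ω)) := by
  have hjoint : entOf p id = entOf p (fun xy => (xy.1, xy.2, φ xy.1)) :=
    entOf_congr p fun xy xy' => by
      simp only [id, Prod.ext_iff]
      exact ⟨fun h => ⟨h.1, h.2, congrArg φ h.1⟩, fun h => ⟨h.1, h.2.1⟩⟩
  calc entOf p id - entOf p (fun xy => (xy.2, φ xy.1))
      = ∑ i : Fin n, condEntOf p (fun xy => xy.1 i) (fun xy => (past i xy.1, xy.2, φ xy.1)) := by
        rw [sum_condEntOf_past p Prod.fst, condEntOf, hjoint]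
    _ ≤ ∑ i : Fin n, condEntOf p (fun xy => xy.1 i)
          (fun xy => (g (φ xy.1) xy.2 i, xy.2 i, WZU φ (xy, i))) :=
        Finset.sum_le_sum fun i _ => hp.condEntOf_le_of_factorsThrough _ fun xy xy' h => by
          simp only [Prod.mk.injEq] at h
          obtain ⟨hpast, hy, hφ⟩ := h
          simp only [WZU_mk, hpast, hy, hφ]
    _ = n * condEntOf (withUniformTime p n) WZXt (fun ω => (WZZt φ g ω, WZYt ω, WZU φ ω)) :=
        (hp.condEntOf_withUniformTime hn WZXt (C := fun ω => (WZZt φ g ω, WZYt ω, WZU φ ω))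
          (time := fun v => v.2.2.2.2.2) fun _ => rfl).symm

theorem IsPMF.entOf_sub_entOf_snd_le (hp : IsPMF p) (hn : n ≠ 0) (φ : (Fin n → α) → Fin M) :
    entOf p id - entOf p Prod.snd
      ≤ n * condEntOf (withUniformTime p n) WZXt (fun ω => (WZYt ω, WZU φ ω))
        + Real.logb 2 M := by
  -- A constant reconstruction turns the conditioning on `(Z̃, Ỹ, U)` into one on `(Ỹ, U)`.
  let blank : Fin M → (Fin n → β) → (Fin n → Unit) := fun _ _ _ => ()
  have hblank := hp.entOf_sub_entOf_le_mul_condEntOf hn φ blank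
  have hforget := mul_le_mul_of_nonneg_left
    ((hp.isPMF_withUniformTime hn).condEntOf_prodMk_le WZXt (WZZt φ blank)
      (fun ω => (WZYt ω, WZU φ ω))) n.cast_nonneg
  have hmessage : condEntOf p (fun xy => φ xy.1) Prod.snd ≤ Real.logb 2 M := by
    simpa using hp.condEntOf_le_logb_card (fun xy => φ xy.1) Prod.snd
  have hswap : entOf p (fun xy => (φ xy.1, xy.2)) = entOf p (fun xy => (xy.2, φ xy.1)) :=
    entOf_congr p fun xy xy' => by simp only [Prod.mk.injEq, and_comm]
  rw [condEntOf, hswap] at hmessage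
  linarith

theorem IsPMF.mul_condMIOf_sub_condEntOf_le [Finite γ] (hp : IsPMF p) (hn : n ≠ 0)
    (φ : (Fin n → α) → Fin M) (g : Fin M → (Fin n → β) → (Fin n → γ)) :
    n * (condMIOf (withUniformTime p n) WZXt (WZZt φ g) (fun ω => (WZYt ω, WZU φ ω))
        - condEntOf (withUniformTime p n) WZYt (fun ω => (WZXt ω, WZU φ ω)))
      ≤ entOf p Prod.fst - entOf p id := by
  rw [condMIOf_eq_condEntOf_sub_condEntOf]
  have hcsiszar := hp.mul_condEntOf_sub_mul_condEntOf hn φ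
  have hreconstruct := hp.entOf_sub_entOf_le_mul_condEntOf hn φ g
  linarith

end SingleLetter

section Conditioning

variable {Ω : Type*} [Fintype Ω] {p : Ω → ℝ} {S : Set Ω}

theorem probSet_setOf (p : Ω → ℝ) (q : Ω → Prop) [DecidablePred q] :
    probSet p {ω | q ω} = ∑ ω, if q ω then p ω else 0 := by
  unfold probSet
  congr!

theorem probSet_nonneg (hp : ∀ ω, 0 ≤ p ω) (S : Set Ω) : 0 ≤ probSet p S :=
  Finset.sum_nonneg fun ω _ => by split_ifs <;> simp [hp ω]

theorem probSet_le_weighted_sum (hp : ∀ ω, 0 ≤ p ω) {f : Ω → ℝ} (hf : ∀ ω, 0 ≤ f ω)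
    (hS : ∀ ω ∈ S, p ω ≠ 0 → 1 ≤ f ω) : probSet p S ≤ ∑ ω, p ω * f ω := by
  refine Finset.sum_le_sum fun ω _ => ?_
  split_ifs with hω
  · rcases eq_or_ne (p ω) 0 with hpω | hpω
    · simp [hpω]
    · exact le_mul_of_one_le_right (hp ω) (hS ω hω hpω)
  · exact mul_nonneg (hp ω) (hf ω)

theorem IsPMF.probSet_le_one (hp : IsPMF p) (S : Set Ω) : probSet p S ≤ 1 := by
  simpa [hp.2] using probSet_le_weighted_sum (S := S) (f := 1) hp.1 (by simp) (by simp)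

theorem IsPMF.one_sub_probSet_compl_sub_probSet_compl_le (hp : IsPMF p) (S T : Set Ω) :
    1 - probSet p Sᶜ - probSet p Tᶜ ≤ probSet p (S ∩ T) := by
  rw [← hp.2, probSet, probSet, probSet, ← Finset.sum_sub_distrib, ← Finset.sum_sub_distrib]
  refine Finset.sum_le_sum fun ω _ => ?_
  have hω := hp.1 ω
  by_cases hS : ω ∈ S <;> by_cases hT : ω ∈ T <;> simp [hS, hT, hω]

open Classical in
/-- The law `p` conditioned on the event `S`. It is the zero function when `S` is a null event. -/
def condOn (p : Ω → ℝ) (S : Set Ω) (ω : Ω) : ℝ :=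
  if ω ∈ S then p ω / probSet p S else 0

theorem condOn_nonneg (hp : ∀ ω, 0 ≤ p ω) (S : Set Ω) (ω : Ω) : 0 ≤ condOn p S ω := by
  unfold condOn
  split_ifs
  exacts [div_nonneg (hp ω) (probSet_nonneg hp S), le_rfl]

theorem sum_condOn (p : Ω → ℝ) (S : Set Ω) :
    ∑ ω, condOn p S ω = probSet p S / probSet p S := by
  nth_rw 1 [probSet]
  simp only [condOn, Finset.sum_div, ite_div, zero_div]

theorem isPMF_condOn (hp : ∀ ω, 0 ≤ p ω) (hS : 0 < probSet p S) : IsPMF (condOn p S) :=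
  ⟨condOn_nonneg hp S, (sum_condOn p S).trans (div_self hS.ne')⟩

theorem mem_of_condOn_ne_zero {ω : Ω} (hω : condOn p S ω ≠ 0) : ω ∈ S := by
  by_contra hS
  exact hω (if_neg hS)

theorem condOn_of_mem (p : Ω → ℝ) {ω : Ω} (hω : ω ∈ S) :
    condOn p S ω = p ω / probSet p S :=
  if_pos hω

theorem entOf_condOn_id (hp : ∀ ω, 0 ≤ p ω) (hS : 0 < probSet p S) :
    entOf (condOn p S) id
      = Real.logb 2 (probSet p S) - ∑ ω, condOn p S ω * Real.logb 2 (p ω) := by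
  have hlog (ω : Ω) (hω : condOn p S ω ≠ 0) :
      Real.logb 2 (condOn p S ω) = Real.logb 2 (p ω) - Real.logb 2 (probSet p S) := by
    have hcond := condOn_of_mem p (mem_of_condOn_ne_zero hω)
    rw [hcond] at hω ⊢
    exact Real.logb_div (div_ne_zero_iff.1 hω).1 hS.ne'
  simp only [entOf, probEq_id, id]
  rw [weighted_sum_congr hlog]
  simp only [mul_sub, Finset.sum_sub_distrib, (isPMF_condOn hp hS).sum_mul_const]
  ring

end Conditioning

section IID

variable {W : Type*} [Fintype W] {P : W → ℝ}

theorem IsPMF.isPMF_iidSeq (hP : IsPMF P) (n : ℕ) : IsPMF (iidSeq P n) := by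
  refine ⟨fun w => Finset.prod_nonneg fun i _ => hP.1 _, ?_⟩
  simp only [iidSeq, ← Fintype.sum_pow, hP.2, one_pow]

theorem sum_iidSeq_succ_mul (P : W → ℝ) {n : ℕ} (f : (Fin (n + 1) → W) → ℝ) :
    ∑ w, iidSeq P (n + 1) w * f w = ∑ a, P a * ∑ w, iidSeq P n w * f (Fin.cons a w) := by
  rw [← (Fin.consEquiv fun _ : Fin (n + 1) => W).sum_comp, Fintype.sum_prod_type]
  simp [Fin.consEquiv, iidSeq, Fin.prod_univ_succ, Finset.mul_sum, mul_assoc]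

theorem IsPMF.sum_iidSeq_mul_sq_sum (hP : IsPMF P) {f : W → ℝ} (hf : ∑ a, P a * f a = 0)
    (n : ℕ) :
    ∑ w, iidSeq P n w * (∑ i, f (w i)) ^ 2 = n * ∑ a, P a * f a ^ 2 := by
  induction n with
  | zero => simp
  | succ n ih =>
    let mean : ℝ := ∑ w, iidSeq P n w * ∑ i, f (w i)
    have hslice (a : W) : ∑ w, iidSeq P n w * (f a + ∑ i, f (w i)) ^ 2
        = f a ^ 2 + f a * (2 * mean) + n * ∑ b, P b * f b ^ 2 := by
      rw [← ih, ← (hP.isPMF_iidSeq n).sum_mul_const (f a ^ 2)]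
      simp only [mean, Finset.mul_sum (s := (Finset.univ : Finset (Fin n → W))),
        ← Finset.sum_add_distrib]
      exact Finset.sum_congr rfl fun w _ => by ring
    simp only [sum_iidSeq_succ_mul, Fin.sum_univ_succ, Fin.cons_zero, Fin.cons_succ, hslice,
      mul_add, Finset.sum_add_distrib, hP.sum_mul_const, ← mul_assoc, ← Finset.sum_mul, hf]
    push_cast
    ring

theorem pairSeq_bijective {α β : Type*} {n : ℕ} :
    Function.Bijective (pairSeq : (Fin n → α) × (Fin n → β) → Fin n → α × β) :=
  (Equiv.arrowProdEquivProdArrow (Fin n) (fun _ => α) (fun _ => β)).symm.bijective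

theorem IsPMF.isPMF_iidPair {α β : Type*} [Fintype α] [Fintype β] {P : α × β → ℝ} (hP : IsPMF P)
    (n : ℕ) : IsPMF (iidPair P n) :=
  ⟨fun xy => (hP.isPMF_iidSeq n).1 (pairSeq xy),
    (pairSeq_bijective.sum_comp (iidSeq P n)).trans (hP.isPMF_iidSeq n).2⟩

theorem probSet_iidPair_preimage {α β : Type*} [Fintype α] [Fintype β] (P : α × β → ℝ) {n : ℕ}
    (S : Set (Fin n → α × β)) :
    probSet (iidPair P n) (pairSeq ⁻¹' S) = probSet (iidSeq P n) S := by
  classical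
  exact pairSeq_bijective.sum_comp fun w => if w ∈ S then iidSeq P n w else 0

end IID

section Typicality

variable {W : Type*} {n : ℕ}

theorem natCast_Ncount [DecidableEq W] (w : Fin n → W) (a : W) :
    (Ncount w a : ℝ) = ∑ i, if w i = a then 1 else 0 := by
  rw [Finset.sum_boole, Ncount]
  congr!

theorem Ncount_ne_zero_iff {w : Fin n → W} {a : W} : Ncount w a ≠ 0 ↔ ∃ i, w i = a := by
  simp [Ncount, Finset.filter_eq_empty_iff]

variable [Fintype W] {P : W → ℝ} {μ : ℝ} {w : Fin n → W}

theorem sum_comp_eq_sum_Ncount_mul (w : Fin n → W) (f : W → ℝ) :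
    ∑ i, f (w i) = ∑ a, (Ncount w a : ℝ) * f a := by
  classical
  simp only [natCast_Ncount, Finset.sum_mul, ite_mul, one_mul, zero_mul]
  rw [Finset.sum_comm]
  simp

theorem abs_sum_comp_sub_le_of_mem_typicalSet (hw : w ∈ typicalSet P μ n) (f : W → ℝ) :
    |∑ i, f (w i) - n * ∑ a, P a * f a| ≤ n * (μ * ∑ a, |f a|) := by
  rcases eq_or_ne n 0 with rfl | hn
  · simp
  have hn' : (n : ℝ) ≠ 0 := Nat.cast_ne_zero.2 hn
  calc |∑ i, f (w i) - n * ∑ a, P a * f a|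
      = |∑ a, n * ((Ncount w a / n - P a) * f a)| := by
        rw [sum_comp_eq_sum_Ncount_mul, Finset.mul_sum, ← Finset.sum_sub_distrib]
        exact congrArg _ (Finset.sum_congr rfl fun a _ => by field_simp)
    _ ≤ ∑ a, n * (μ * |f a|) := by
        refine (Finset.abs_sum_le_sum_abs _ _).trans (Finset.sum_le_sum fun a _ => ?_)
        rw [abs_mul, abs_mul, Nat.abs_cast]
        gcongr
        exact (hw a).1
    _ = n * (μ * ∑ a, |f a|) := by simp only [Finset.mul_sum]

theorem apply_ne_zero_of_mem_typicalSet (hw : w ∈ typicalSet P μ n) (i : Fin n) :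
    P (w i) ≠ 0 := fun h => Ncount_ne_zero_iff.2 ⟨i, rfl⟩ ((hw (w i)).2 h)

theorem exists_lt_abs_of_notMem_typicalSet (hw : w ∉ typicalSet P μ n) (hPw : iidSeq P n w ≠ 0) :
    ∃ a, μ < |(Ncount w a : ℝ) / n - P a| := by
  by_contra! hfreq
  refine hw fun a => ⟨hfreq a, fun ha => by_contra fun hcount => ?_⟩
  obtain ⟨i, rfl⟩ := Ncount_ne_zero_iff.1 hcount
  exact hPw (Finset.prod_eq_zero (Finset.mem_univ i) ha)

theorem IsPMF.sum_iidSeq_mul_sq_freq_sub (hP : IsPMF P) (hn : n ≠ 0) (a : W) :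
    ∑ w, iidSeq P n w * ((Ncount w a : ℝ) / n - P a) ^ 2 = P a * (1 - P a) / n := by
  classical
  have hn' : (n : ℝ) ≠ 0 := Nat.cast_ne_zero.2 hn
  let f : W → ℝ := fun b => (if b = a then 1 else 0) - P a
  have hf_mean : ∑ b, P b * f b = 0 := by
    simp [f, mul_sub, hP.sum_mul_const]
  have hf_sq (b : W) : f b ^ 2 = (if b = a then 1 - 2 * P a else 0) + P a ^ 2 := by
    simp only [f]
    split_ifs <;> ring
  have hf_var : ∑ b, P b * f b ^ 2 = P a * (1 - P a) := by
    simp only [hf_sq, mul_add, Finset.sum_add_distrib, hP.sum_mul_const]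
    simp only [mul_ite, mul_zero, Finset.sum_ite_eq', Finset.mem_univ, if_true]
    ring
  have hfreq (w : Fin n → W) : (Ncount w a : ℝ) / n - P a = (∑ i, f (w i)) / n := by
    simp only [f, Finset.sum_sub_distrib, ← natCast_Ncount, Finset.sum_const, Finset.card_univ,
      Fintype.card_fin, nsmul_eq_mul]
    field_simp
  simp only [hfreq, div_pow, mul_div_assoc', ← Finset.sum_div, hP.sum_iidSeq_mul_sq_sum hf_mean,
    hf_var]
  field_simp

theorem IsPMF.probSet_typicalSet_compl_le (hP : IsPMF P) (hn : n ≠ 0) (hμ : 0 < μ) :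
    probSet (iidSeq P n) (typicalSet P μ n)ᶜ ≤ 1 / (n * μ ^ 2) := by
  have hchebyshev (w : Fin n → W) (hw : w ∈ (typicalSet P μ n)ᶜ) (hPw : iidSeq P n w ≠ 0) :
      1 ≤ ∑ a, ((Ncount w a : ℝ) / n - P a) ^ 2 / μ ^ 2 := by
    obtain ⟨a, ha⟩ := exists_lt_abs_of_notMem_typicalSet hw hPw
    calc 1 ≤ ((Ncount w a : ℝ) / n - P a) ^ 2 / μ ^ 2 := by
          rw [one_le_div (pow_pos hμ 2), sq_le_sq, abs_of_pos hμ]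
          exact ha.le
      _ ≤ _ := Finset.single_le_sum
          (f := fun a => ((Ncount w a : ℝ) / n - P a) ^ 2 / μ ^ 2)
          (fun b _ => by positivity) (Finset.mem_univ a)
  calc probSet (iidSeq P n) (typicalSet P μ n)ᶜ
      ≤ ∑ w, iidSeq P n w * ∑ a, ((Ncount w a : ℝ) / n - P a) ^ 2 / μ ^ 2 :=
        probSet_le_weighted_sum (hP.isPMF_iidSeq n).1
          (fun w => Finset.sum_nonneg fun a _ => by positivity) hchebyshev
    _ = ∑ a, P a * (1 - P a) / n / μ ^ 2 := by
        simp only [Finset.mul_sum, mul_div_assoc']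
        rw [Finset.sum_comm]
        simp only [← Finset.sum_div, hP.sum_iidSeq_mul_sq_freq_sub hn]
    _ ≤ ∑ a, P a / n / μ ^ 2 := by
        gcongr with a
        nlinarith [sq_nonneg (P a)]
    _ = 1 / (n * μ ^ 2) := by
        rw [← Finset.sum_div, ← Finset.sum_div, hP.2, div_div]

end Typicality

section TypicalEntropy

variable {Ω W β : Type*} [Fintype Ω] [Fintype W] {P : W → ℝ} {q : Ω → ℝ} {μ : ℝ} {n : ℕ}
  {w : Ω → Fin n → W}

/-- The sum over the alphabet of `|log P(π = π a)|`. Multiplied by `μ` it bounds how far the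
normalized log-likelihood of the `π`-image of a `μ`-typical sequence lies from the entropy of
`π`. -/
def sumAbsLogProb (P : W → ℝ) (π : W → β) : ℝ :=
  ∑ a, |Real.logb 2 (probEq P π (π a))|

theorem logb_iidSeq_probEq_of_mem_typicalSet [Fintype β] (hP : ∀ a, 0 ≤ P a) (π : W → β)
    {v : Fin n → W} (hv : v ∈ typicalSet P μ n) :
    Real.logb 2 (iidSeq (probEq P π) n (fun i => π (v i)))
      = ∑ i, Real.logb 2 (probEq P π (π (v i))) :=
  Real.logb_prod _ _ fun i _ => (probEq_pos hP π (apply_ne_zero_of_mem_typicalSet hv i)).ne'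

theorem IsPMF.abs_crossEntropy_iidSeq_sub_le [Fintype β] (hq : IsPMF q) (hP : ∀ a, 0 ≤ P a)
    (hw : ∀ ω, q ω ≠ 0 → w ω ∈ typicalSet P μ n) (π : W → β) :
    |∑ ω, q ω * Real.logb 2 (iidSeq (probEq P π) n (fun i => π (w ω i))) - n * -entOf P π|
      ≤ n * (μ * sumAbsLogProb P π) := by
  refine hq.abs_weighted_sum_sub_le fun ω hω => ?_
  rw [logb_iidSeq_probEq_of_mem_typicalSet hP π (hw ω hω), entOf, neg_neg]
  exact abs_sum_comp_sub_le_of_mem_typicalSet (hw ω hω) fun a => Real.logb 2 (probEq P π (π a))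

theorem IsPMF.entOf_comp_le_of_mem_typicalSet [Finite β] (hq : IsPMF q) (hP : IsPMF P)
    (hw : ∀ ω, q ω ≠ 0 → w ω ∈ typicalSet P μ n) (π : W → β) :
    entOf q (fun ω i => π (w ω i)) ≤ n * (entOf P π + μ * sumAbsLogProb P π) := by
  have := Fintype.ofFinite β
  have hiid := (hP.isPMF_probEq π).isPMF_iidSeq n
  have hgibbs := hq.entOf_le_crossEntropy (fun ω i => π (w ω i)) hiid.1 hiid.2.le fun ω hω =>
    Finset.prod_pos fun i _ => probEq_pos hP.1 π (apply_ne_zero_of_mem_typicalSet (hw ω hω) i)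
  have hcross := (abs_le.1 (hq.abs_crossEntropy_iidSeq_sub_le hP.1 hw π)).1
  linarith

theorem le_entOf_condOn_iidPair {α β : Type*} [Fintype α] [Fintype β] {P : α × β → ℝ}
    (hP : IsPMF P) {S : Set ((Fin n → α) × (Fin n → β))} (hS : 0 < probSet (iidPair P n) S)
    (hS_typical : S ⊆ pairSeq ⁻¹' typicalSet P μ n) :
    n * (entOf P id - μ * sumAbsLogProb P id) + Real.logb 2 (probSet (iidPair P n) S)
      ≤ entOf (condOn (iidPair P n) S) id := by
  have hiid := (hP.isPMF_iidPair n).1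
  have hcross := (abs_le.1 ((isPMF_condOn hiid hS).abs_crossEntropy_iidSeq_sub_le hP.1
    (fun xy hxy => hS_typical (mem_of_condOn_ne_zero hxy)) id)).2
  have hiid_eq (xy : (Fin n → α) × (Fin n → β)) :
      iidSeq (probEq P id) n (fun i => id (pairSeq xy i)) = iidPair P n xy := by
    rw [probEq_id]
    rfl
  simp only [hiid_eq] at hcross
  rw [entOf_condOn_id hiid hS]
  linarith

end TypicalEntropy

section Asymptotics

theorem μseq_pos {n : ℕ} (hn : n ≠ 0) : 0 < μseq n :=
  Real.rpow_pos_of_pos (Nat.cast_pos.2 hn.pos) _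

theorem tendsto_μseq : Tendsto μseq atTop (nhds 0) :=
  (tendsto_rpow_neg_atTop (by norm_num)).comp tendsto_natCast_atTop_atTop

theorem one_div_mul_sq_μseq {n : ℕ} (hn : n ≠ 0) : 1 / (n * μseq n ^ 2) = μseq n := by
  have hn' : (0 : ℝ) < n := Nat.cast_pos.2 hn.pos
  have hcube : μseq n ^ 3 = (n : ℝ)⁻¹ := by
    rw [μseq, ← Real.rpow_natCast, ← Real.rpow_mul hn'.le, ← Real.rpow_neg_one]
    norm_num
  have hcube' : n * μseq n ^ 3 = 1 := by rw [hcube, mul_inv_cancel₀ hn'.ne']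
  rw [div_eq_iff (mul_ne_zero hn'.ne' (pow_ne_zero 2 (μseq_pos hn).ne'))]
  linarith

theorem tendsto_logb_div_natCast {u : ℕ → ℝ} {c : ℝ} (hc : 0 < c) (hcu : ∀ᶠ n in atTop, c ≤ u n)
    (hu : ∀ n, u n ≤ 1) : Tendsto (fun n => Real.logb 2 (u n) / n) atTop (nhds 0) := by
  refine tendsto_of_tendsto_of_tendsto_of_le_of_le'
    (tendsto_const_div_atTop_nhds_zero_nat (Real.logb 2 c)) tendsto_const_nhds ?_ ?_
  · filter_upwards [hcu] with n hn
    gcongr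
    exact one_lt_two
  · filter_upwards [hcu] with n hn
    exact div_nonpos_of_nonpos_of_nonneg
      (Real.logb_nonpos one_lt_two (hc.le.trans hn) (hu n)) n.cast_nonneg

theorem exists_tendsto_zero_forall_le {u v : ℕ → ℝ} (hv : Tendsto v atTop (nhds 0))
    (hvu : ∀ᶠ n in atTop, v n ≤ u n) :
    ∃ o : ℕ → ℝ, Tendsto o atTop (nhds 0) ∧ ∀ n, o n ≤ u n :=
  ⟨fun n => min (v n) (u n), hv.congr' (hvu.mono fun _ h => (min_eq_left h).symm),
    fun _ => min_le_right _ _⟩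

end Asymptotics

section WynerZiv

variable {α β γ : Type*} [Fintype α] [Fintype β] {P : α × β → ℝ} {d : α → γ → ℝ} {D : ℝ}
  {n M : ℕ} {φ : (Fin n → α) → Fin M} {g : Fin M → (Fin n → β) → (Fin n → γ)}

theorem WZfull_eq (P : α × β → ℝ) (d : α → γ → ℝ) (D : ℝ) (φ : (Fin n → α) → Fin M)
    (g : Fin M → (Fin n → β) → (Fin n → γ)) :
    WZfull P d D φ g = withUniformTime (condOn (iidPair P n) (WZD P d D φ g)) n :=
  rfl

theorem IsPMF.isPMF_condOn_WZD (hP : IsPMF P) (hΔ : 0 < WZdelta P d D φ g) :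
    IsPMF (condOn (iidPair P n) (WZD P d D φ g)) :=
  isPMF_condOn (hP.isPMF_iidPair n).1 hΔ

theorem IsPMF.entOf_condOn_WZD_le {δ : Type*} [Finite δ] (hP : IsPMF P)
    (hΔ : 0 < WZdelta P d D φ g) (π : α × β → δ) :
    entOf (condOn (iidPair P n) (WZD P d D φ g)) (fun xy i => π (pairSeq xy i))
      ≤ n * (entOf P π + μseq n * sumAbsLogProb P π) :=
  (hP.isPMF_condOn_WZD hΔ).entOf_comp_le_of_mem_typicalSet hP
    (fun _ hxy => (mem_of_condOn_ne_zero hxy).1) π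

theorem IsPMF.le_entOf_condOn_WZD (hP : IsPMF P) (hΔ : 0 < WZdelta P d D φ g) :
    n * (entOf P id - μseq n * sumAbsLogProb P id) + Real.logb 2 (WZdelta P d D φ g)
      ≤ entOf (condOn (iidPair P n) (WZD P d D φ g)) id :=
  le_entOf_condOn_iidPair hP hΔ fun _ hxy => hxy.1

theorem IsPMF.logb_WZdelta_div_sub_le_rate_sub (hP : IsPMF P) (hn : n ≠ 0)
    (hΔ : 0 < WZdelta P d D φ g) {R : ℝ} (hM : (M : ℝ) ≤ 2 ^ ((n : ℝ) * R)) :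
    Real.logb 2 (WZdelta P d D φ g) / n
        - μseq n * (sumAbsLogProb P id + sumAbsLogProb P Prod.snd)
      ≤ R - (condEntOf P Prod.fst Prod.snd
          - condEntOf (WZfull P d D φ g) WZXt (fun ω => (WZYt ω, WZU φ ω))) := by
  have hq := hP.isPMF_condOn_WZD hΔ
  have hM_pos : (0 : ℝ) < M := by
    obtain ⟨xy⟩ := hq.nonempty
    exact_mod_cast (φ xy.1).pos
  have hmessage : Real.logb 2 M ≤ n * R := (Real.logb_le_iff_le_rpow one_lt_two hM_pos).2 hM
  have hjoint := hP.le_entOf_condOn_WZD hΔ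
  have hside : entOf (condOn (iidPair P n) (WZD P d D φ g)) Prod.snd
      ≤ n * (entOf P Prod.snd + μseq n * sumAbsLogProb P Prod.snd) :=
    hP.entOf_condOn_WZD_le hΔ Prod.snd
  have hsingle := hq.entOf_sub_entOf_snd_le hn φ
  have hcond : condEntOf P Prod.fst Prod.snd = entOf P id - entOf P Prod.snd := rfl
  rw [WZfull_eq, hcond, div_sub' (Nat.cast_ne_zero.2 hn), div_le_iff₀' (Nat.cast_pos.2 hn.pos)]
  linarith

theorem IsPMF.logb_WZdelta_div_sub_le_neg_condMIOf [Finite γ] (hP : IsPMF P) (hn : n ≠ 0)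
    (hΔ : 0 < WZdelta P d D φ g) :
    Real.logb 2 (WZdelta P d D φ g) / n
        - μseq n * (sumAbsLogProb P id + sumAbsLogProb P Prod.fst)
      ≤ -(condMIOf (WZfull P d D φ g) WZXt (WZZt φ g) (fun ω => (WZYt ω, WZU φ ω))
          - condEntOf (WZfull P d D φ g) WZYt (fun ω => (WZXt ω, WZU φ ω))
          + condEntOf P Prod.snd Prod.fst) := by
  have hjoint := hP.le_entOf_condOn_WZD hΔ
  have hsource : entOf (condOn (iidPair P n) (WZD P d D φ g)) Prod.fst
      ≤ n * (entOf P Prod.fst + μseq n * sumAbsLogProb P Prod.fst) :=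
    hP.entOf_condOn_WZD_le hΔ Prod.fst
  have hsingle := (hP.isPMF_condOn_WZD hΔ).mul_condMIOf_sub_condEntOf_le hn φ g
  have hcond : condEntOf P Prod.snd Prod.fst = entOf P id - entOf P Prod.fst :=
    congrArg (· - entOf P Prod.fst) (entOf_congr P fun a b => by
      simp only [id, Prod.ext_iff, and_comm])
  rw [WZfull_eq, hcond, div_sub' (Nat.cast_ne_zero.2 hn), div_le_iff₀' (Nat.cast_pos.2 hn.pos)]
  linarith

theorem IsPMF.condMIOf_WZfull_nonneg [Finite γ] (hP : IsPMF P) (hn : n ≠ 0)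
    (hΔ : 0 < WZdelta P d D φ g) :
    0 ≤ condMIOf (WZfull P d D φ g) WZXt (WZZt φ g) (fun ω => (WZYt ω, WZU φ ω)) :=
  ((hP.isPMF_condOn_WZD hΔ).isPMF_withUniformTime hn).condMIOf_nonneg _ _ _

theorem IsPMF.sum_WZfull_mul_distortion_le (hP : IsPMF P) (d : α → γ → ℝ) (hD : 0 ≤ D)
    (φ : (Fin n → α) → Fin M) (g : Fin M → (Fin n → β) → (Fin n → γ)) :
    ∑ ω : ((Fin n → α) × (Fin n → β)) × Fin n,
      WZfull P d D φ g ω * d (WZXt ω) (WZZt φ g ω) ≤ D := by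
  rw [WZfull_eq, sum_withUniformTime_mul]
  calc _ ≤ ∑ xy, condOn (iidPair P n) (WZD P d D φ g) xy * D :=
        weighted_sum_le_weighted_sum (condOn_nonneg (hP.isPMF_iidPair n).1 _)
          fun xy hxy => (mem_of_condOn_ne_zero hxy).2
    _ ≤ D := by
        -- The total mass is at most one even if the event is null, as then `0 / 0 = 0`.
        rw [← Finset.sum_mul, sum_condOn]
        exact mul_le_of_le_one_left hD (div_self_le_one _)

theorem IsPMF.one_sub_excess_sub_μseq_le_WZdelta (hP : IsPMF P) (hn : n ≠ 0) :
    1 - probSet (iidPair P n) {xy | D < (∑ i, d (xy.1 i) (g (φ xy.1) xy.2 i)) / n} - μseq n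
      ≤ WZdelta P d D φ g := by
  have hatypical := (probSet_iidPair_preimage P _).trans_le
    (hP.probSet_typicalSet_compl_le hn (μseq_pos hn))
  rw [one_div_mul_sq_μseq hn] at hatypical
  have hinter := (hP.isPMF_iidPair n).one_sub_probSet_compl_sub_probSet_compl_le
    (pairSeq ⁻¹' typicalSet P (μseq n) n)
    {xy | (∑ i, d (xy.1 i) (g (φ xy.1) xy.2 i)) / n ≤ D}
  simp only [Set.compl_ofPred, not_le] at hinter
  rw [Set.preimage_compl] at hatypical
  have hWZD : probSet (iidPair P n) (pairSeq ⁻¹' typicalSet P (μseq n) n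
      ∩ {xy | (∑ i, d (xy.1 i) (g (φ xy.1) xy.2 i)) / n ≤ D}) = WZdelta P d D φ g := rfl
  linarith

end WynerZiv

section BlockCodes

variable {α β γ : Type*} [Fintype α] [Fintype β] {P : α × β → ℝ} {d : α → γ → ℝ} {D : ℝ}
  {M : ℕ → ℕ} {φ : ∀ n : ℕ, (Fin n → α) → Fin (M n)}
  {g : ∀ n : ℕ, Fin (M n) → (Fin n → β) → (Fin n → γ)}

theorem IsPMF.exists_pos_eventually_le_WZdelta (hP : IsPMF P) {ε : ℝ} (hε : ε < 1)
    (hexcess : limsup (fun n => ∑ xy : (Fin n → α) × (Fin n → β),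
      if D < (∑ i, d (xy.1 i) (g n (φ n xy.1) xy.2 i)) / n then iidPair P n xy else 0)
        atTop ≤ ε) :
    ∃ c > 0, ∀ᶠ n in atTop, c ≤ WZdelta P d D (φ n) (g n) := by
  simp only [← probSet_setOf] at hexcess
  have hexcess_lt := eventually_lt_of_limsup_lt
    (hexcess.trans_lt (show ε < (1 + ε) / 2 by linarith))
    (isBoundedUnder_of ⟨1, fun n => (hP.isPMF_iidPair n).probSet_le_one _⟩)
  have hμ_lt := tendsto_μseq.eventually_lt_const (show 0 < (1 - ε) / 4 by linarith)
  refine ⟨(1 - ε) / 4, by linarith, ?_⟩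
  filter_upwards [hexcess_lt, hμ_lt, eventually_ne_atTop 0] with n hexcess_lt hμ_lt hn
  linarith [hP.one_sub_excess_sub_μseq_le_WZdelta (d := d) (D := D) (φ := φ n) (g := g n) hn]

theorem IsPMF.tendsto_logb_WZdelta_div (hP : IsPMF P) {c : ℝ} (hc : 0 < c)
    (hΔ : ∀ᶠ n in atTop, c ≤ WZdelta P d D (φ n) (g n)) :
    Tendsto (fun n => Real.logb 2 (WZdelta P d D (φ n) (g n)) / n) atTop (nhds 0) :=
  tendsto_logb_div_natCast hc hΔ fun n => (hP.isPMF_iidPair n).probSet_le_one _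

theorem tendsto_logb_WZdelta_div_sub
    (hlogΔ : Tendsto (fun n => Real.logb 2 (WZdelta P d D (φ n) (g n)) / n) atTop (nhds 0))
    (c : ℝ) :
    Tendsto (fun n => Real.logb 2 (WZdelta P d D (φ n) (g n)) / n - μseq n * c) atTop
      (nhds 0) := by
  simpa using hlogΔ.sub (tendsto_μseq.mul_const c)

theorem wyner_ziv_key_lemma_general [Finite γ] (hP : IsPMF P) (hD : 0 ≤ D) (R : ℝ)
    (hrate : ∀ n, (M n : ℝ) ≤ 2 ^ ((n : ℝ) * R))
    (hΔ : ∀ᶠ n in atTop, 0 < WZdelta P d D (φ n) (g n))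
    (hlogΔ : Tendsto (fun n => Real.logb 2 (WZdelta P d D (φ n) (g n)) / n) atTop (nhds 0)) :
    ∃ o₁ o₂ : ℕ → ℝ,
      Tendsto o₁ atTop (nhds 0) ∧ Tendsto o₂ atTop (nhds 0) ∧
      ∀ n : ℕ,
        (condEntOf P Prod.fst Prod.snd + o₁ n
            - condEntOf (WZfull P d D (φ n) (g n)) WZXt
                (fun ω => (WZYt ω, WZU (φ n) ω)) ≤ R) ∧
        (condEntOf P Prod.snd Prod.fst + o₂ n
            - condEntOf (WZfull P d D (φ n) (g n)) WZYt
                (fun ω => (WZXt ω, WZU (φ n) ω)) ≤ 0) ∧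
        (condMIOf (WZfull P d D (φ n) (g n)) WZXt (WZZt (φ n) (g n))
              (fun ω => (WZYt ω, WZU (φ n) ω))
            - condEntOf (WZfull P d D (φ n) (g n)) WZYt
                (fun ω => (WZXt ω, WZU (φ n) ω))
            + condEntOf P Prod.snd Prod.fst + o₂ n ≤ 0) ∧
        (∑ ω : ((Fin n → α) × (Fin n → β)) × Fin n,
            WZfull P d D (φ n) (g n) ω * d (WZXt ω) (WZZt (φ n) (g n) ω) ≤ D) := by
  obtain ⟨o₁, ho₁, hrate_bound⟩ := exists_tendsto_zero_forall_le
    (tendsto_logb_WZdelta_div_sub hlogΔ _) (by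
      filter_upwards [hΔ, eventually_ne_atTop 0] with n hΔn hn
      exact hP.logb_WZdelta_div_sub_le_rate_sub hn hΔn (hrate n))
  obtain ⟨o₂, ho₂, hinfo_bound⟩ := exists_tendsto_zero_forall_le
    (tendsto_logb_WZdelta_div_sub hlogΔ _) (by
      filter_upwards [hΔ, eventually_ne_atTop 0] with n hΔn hn
      have hinfo := hP.logb_WZdelta_div_sub_le_neg_condMIOf hn hΔn
      have hnonneg := hP.condMIOf_WZfull_nonneg hn hΔn
      exact le_min hinfo (hinfo.trans (neg_le_neg (add_le_add_left
        (sub_le_sub_right hnonneg _) _))))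
  refine ⟨o₁, o₂, ho₁, ho₂, fun n => ⟨?_, ?_, ?_, hP.sum_WZfull_mul_distortion_le d hD (φ n) (g n)⟩⟩
  · linarith [hrate_bound n]
  · linarith [(hinfo_bound n).trans (min_le_right _ _)]
  · linarith [(hinfo_bound n).trans (min_le_left _ _)]

end BlockCodes

/-- key lemma for the Wyner–Ziv strong converse. With
`U := (X̃^{T−1}, Ỹ_{T+1}ⁿ, M̃, T)`, there exist sequences `o₁'(n) → 0`, `o₂'(n) → 0`
such that (i) `R ≥ H(X|Y) + o₁'(n) − H(X̃|Ỹ,U)`; (ii) `0 ≥ H(Y|X) + o₂'(n) − H(Ỹ|X̃,U)`;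
(iii) `0 ≥ I(X̃;Z̃|Ỹ,U) − H(Ỹ|X̃,U) + H(Y|X) + o₂'(n)`; and (iv) `E[d(X̃,Z̃)] ≤ D`. -/
theorem wyner_ziv_key_lemma
    (P : X × Y → ℝ) (hP : IsPMF P)
    (d : X → Z → ℝ) (hd : ∀ x z, 0 ≤ d x z) (D : ℝ) (hD : 0 < D)
    (ε : ℝ) (hε0 : 0 ≤ ε) (hε1 : ε < 1) (R : ℝ) (hR : 0 < R)
    (M : ℕ → ℕ) (φ : ∀ n : ℕ, (Fin n → X) → Fin (M n))
    (g : ∀ n : ℕ, Fin (M n) → (Fin n → Y) → (Fin n → Z))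
    (hrate : ∀ n, (M n : ℝ) ≤ 2 ^ ((n : ℝ) * R))
    (hexcess : limsup (fun n => ∑ xy : (Fin n → X) × (Fin n → Y),
        if D < (∑ i, d (xy.1 i) (g n (φ n xy.1) xy.2 i)) / n
        then iidPair P n xy else 0) atTop ≤ ε) :
    ∃ o₁ o₂ : ℕ → ℝ,
      Tendsto o₁ atTop (nhds 0) ∧ Tendsto o₂ atTop (nhds 0) ∧
      ∀ n : ℕ,
        (condEntOf P Prod.fst Prod.snd + o₁ n
            - condEntOf (WZfull P d D (φ n) (g n)) WZXt
                (fun ω => (WZYt ω, WZU (φ n) ω)) ≤ R) ∧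
        (condEntOf P Prod.snd Prod.fst + o₂ n
            - condEntOf (WZfull P d D (φ n) (g n)) WZYt
                (fun ω => (WZXt ω, WZU (φ n) ω)) ≤ 0) ∧
        (condMIOf (WZfull P d D (φ n) (g n)) WZXt (WZZt (φ n) (g n))
              (fun ω => (WZYt ω, WZU (φ n) ω))
            - condEntOf (WZfull P d D (φ n) (g n)) WZYt
                (fun ω => (WZXt ω, WZU (φ n) ω))
            + condEntOf P Prod.snd Prod.fst + o₂ n ≤ 0) ∧
        (∑ ω : ((Fin n → X) × (Fin n → Y)) × Fin n,
            WZfull P d D (φ n) (g n) ω * d (WZXt ω) (WZZt (φ n) (g n) ω) ≤ D) := by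
  obtain ⟨c, hc, hΔ⟩ := hP.exists_pos_eventually_le_WZdelta hε1 hexcess
  exact wyner_ziv_key_lemma_general hP hD.le R hrate (hΔ.mono fun _ => hc.trans_le)
    (hP.tendsto_logb_WZdelta_div hc hΔ)

end WynerZivLemma
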